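/- arXiv:1810.12871 — 3 statements merged into one kernel-verified Lean document; each statement's English description precedes it below -/
import Mathlib

section
/- There exist infinitely many positive integers n (in particular all primes p ≡ 3 mod 4) with the following property: for all t, W, J, θ > 0, taking d = (θ/n)·(1,…,1) ∈ ℝ^n, there exists a ∈ [0,1]^n such that m(n, 2t, W, J, d, a) ≤ m*(n, t, W, J, d). That is, doubling the exposure time suffices for a (quadratic-residue based) binary aperture to match the optimal LMMSE for i.i.d. scenes. -/
/-- Discrete Fourier transform of a real vector `a ∈ ℝ^n`:
`â_j = ∑_{i=0}^{n-1} a_i e^{-2πi·ij/n}`. -/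
noncomputable def dft {n : ℕ} (a : Fin n → ℝ) (j : Fin n) : ℂ :=
  ∑ i : Fin n, (a i : ℂ) *
    Complex.exp (-(2 * Real.pi * Complex.I * ((i : ℕ) : ℂ) * ((j : ℕ) : ℂ)) / (n : ℂ))

/-- Transmissivity `ρ(a) = (1/n) ∑ i, a i`. -/
noncomputable def transmissivity {n : ℕ} (a : Fin n → ℝ) : ℝ :=
  (1 / (n : ℝ)) * ∑ i : Fin n, a i

/-- LMMSE `m(n,t,W,J,d,a) = ∑_i 1/(1/d_i + γ|â_i|²)` with
`γ = t/(n(W+Jρ(a)))`. -/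
noncomputable def lmmse (n : ℕ) (t W J : ℝ) (d : Fin n → ℝ) (a : Fin n → ℝ) : ℝ :=
  ∑ i : Fin n,
    1 / (1 / d i + (t / (n * (W + J * transmissivity a))) * ‖dft a i‖ ^ 2)

/-- Optimal LMMSE `m*(n,t,W,J,d)`: infimum of the LMMSE over apertures `a ∈ [0,1]^n`. -/
noncomputable def lmmseOpt (n : ℕ) (t W J : ℝ) (d : Fin n → ℝ) : ℝ :=
  sInf {m | ∃ a : Fin n → ℝ, (∀ i, a i ∈ Set.Icc (0 : ℝ) 1) ∧ m = lmmse n t W J d a}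

/-- The property of an aperture size `n`: for all parameters and the i.i.d. scene prior
`d = (θ/n)·𝟙`, some aperture `a ∈ [0,1]^n` with doubled exposure time matches the
optimal LMMSE. -/
def GoodApertureSize (n : ℕ) : Prop :=
  ∀ t W J θ : ℝ, 0 < t → 0 < W → 0 < J → 0 < θ →
    ∃ a : Fin n → ℝ, (∀ i, a i ∈ Set.Icc (0 : ℝ) 1) ∧
      lmmse n (2 * t) W J (fun _ => θ / n) a ≤ lmmseOpt n t W J (fun _ => θ / n)

/-!
For the prior `θ·(1,…,1)` the LMMSE is `∑ i, 1 / (1/θ + y i)` with `y i = γ‖dft b i‖²`. Write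
`g ρ = tρ/(W + Jρ)`. By Parseval and `b i ^ 2 ≤ b i`, an aperture `b` of transmissivity `ρ` has
`∑ i, y i ≤ n * g ρ`, of which exactly `n * ρ * g ρ` is spent at frequency `0`.

The indicator of the squares modulo a prime `p ≡ 3 (mod 4)` has `(p + 1) / 2` ones, and at every
nonzero frequency its transform is `(1 + G) / 2` with `G` a Gauss sum. As `G ^ 2 = -p`, `G` is
purely imaginary and the power there is `(p + 1) / 4`. With transmissivity
`σ = (p + 1) / (2 * p)` and doubled exposure this is a signal-to-noise ratio of exactly `g σ` off
frequency `0`, and of `(p + 1) * g σ` at frequency `0`.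

If `ρ ≤ σ`, the average of `y` is at most `g σ`, so Jensen's inequality for `1 / u` suffices.
If `ρ ≥ σ`, then `ρ ≤ 1 < 2 * σ` gives `g ρ ≤ 2 * g σ`, so `y` has at most the total
`2 * p * g σ` of the flat profile, and off frequency `0` at most
`p * (1 - ρ) * g ρ ≤ (p - 1) * g σ`; the tangent-line bound for `1 / u` then applies.
-/

open Finset

section Convexity

variable {ι : Type*} {s : Finset ι} {x y : ι → ℝ}

theorem one_div_add_div_sq_le_one_div {u v : ℝ} (hu : 0 < u) (hv : 0 < v) :
    1 / u + (u - v) / u ^ 2 ≤ 1 / v := by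
  have gap : 1 / v - (1 / u + (u - v) / u ^ 2) = (u - v) ^ 2 / (v * u ^ 2) := by
    field_simp
    ring
  have gap_nonneg : 0 ≤ (u - v) ^ 2 / (v * u ^ 2) := by positivity
  linarith

theorem sum_one_div_le_sum_one_div_of_sum_div_sq_nonneg (hx : ∀ i ∈ s, 0 < x i)
    (hy : ∀ i ∈ s, 0 < y i) (h : 0 ≤ ∑ i ∈ s, (x i - y i) / x i ^ 2) :
    ∑ i ∈ s, 1 / x i ≤ ∑ i ∈ s, 1 / y i :=
  calc ∑ i ∈ s, 1 / x i
      ≤ ∑ i ∈ s, 1 / x i + ∑ i ∈ s, (x i - y i) / x i ^ 2 := le_add_of_nonneg_right h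
    _ = ∑ i ∈ s, (1 / x i + (x i - y i) / x i ^ 2) := sum_add_distrib.symm
    _ ≤ ∑ i ∈ s, 1 / y i :=
        sum_le_sum fun i hi ↦ one_div_add_div_sq_le_one_div (hx i hi) (hy i hi)

theorem sum_one_div_le_sum_one_div_of_sum_le_card_mul {l : ℝ} (hl : 0 < l)
    (hx : ∀ i ∈ s, l ≤ x i) (hy : ∀ i ∈ s, 0 < y i) (h : ∑ i ∈ s, y i ≤ #s * l) :
    ∑ i ∈ s, 1 / x i ≤ ∑ i ∈ s, 1 / y i := by
  calc ∑ i ∈ s, 1 / x i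
      ≤ ∑ _i ∈ s, 1 / l := sum_le_sum fun i hi ↦ one_div_le_one_div_of_le hl (hx i hi)
    _ ≤ ∑ i ∈ s, 1 / y i := by
        refine sum_one_div_le_sum_one_div_of_sum_div_sq_nonneg (fun _ _ ↦ hl) hy ?_
        rw [← sum_div, sum_sub_distrib, sum_const, nsmul_eq_mul]
        exact div_nonneg (sub_nonneg.2 h) (sq_nonneg l)

-- The slope of `1 / u` is steepest at the low level `l`, so what `y` loses against `x` off `i₀`
-- costs more than the same amount gained back at `i₀`.
theorem sum_one_div_le_sum_one_div_of_two_level [DecidableEq ι] {i₀ : ι} {l : ℝ} (hi₀ : i₀ ∈ s)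
    (hl : 0 < l) (hxl : ∀ i ∈ s.erase i₀, x i = l) (hx₀ : l ≤ x i₀) (hy : ∀ i ∈ s, 0 < y i)
    (hoff : ∑ i ∈ s.erase i₀, y i ≤ ∑ i ∈ s.erase i₀, x i)
    (htotal : ∑ i ∈ s, y i ≤ ∑ i ∈ s, x i) :
    ∑ i ∈ s, 1 / x i ≤ ∑ i ∈ s, 1 / y i := by
  have hx : ∀ i ∈ s, 0 < x i := fun i hi ↦ by
    obtain rfl | hne := eq_or_ne i i₀
    · exact hl.trans_le hx₀
    · exact (hxl i (mem_erase.2 ⟨hne, hi⟩)).symm ▸ hl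
  refine sum_one_div_le_sum_one_div_of_sum_div_sq_nonneg hx hy ?_
  have off_i₀ : ∑ i ∈ s.erase i₀, (x i - y i) / x i ^ 2
      = (∑ i ∈ s.erase i₀, (x i - y i)) / l ^ 2 := by
    rw [sum_div]
    exact sum_congr rfl fun i hi ↦ by rw [hxl i hi]
  have loss_nonneg : 0 ≤ ∑ i ∈ s.erase i₀, (x i - y i) := by
    rw [sum_sub_distrib]
    exact sub_nonneg.2 hoff
  calc 0 ≤ (∑ i ∈ s, (x i - y i)) / x i₀ ^ 2 := by
        rw [sum_sub_distrib]
        exact div_nonneg (sub_nonneg.2 htotal) (sq_nonneg _)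
    _ = (∑ i ∈ s.erase i₀, (x i - y i)) / x i₀ ^ 2 + (x i₀ - y i₀) / x i₀ ^ 2 := by
        rw [← sum_erase_add s _ hi₀, add_div]
    _ ≤ (∑ i ∈ s.erase i₀, (x i - y i)) / l ^ 2 + (x i₀ - y i₀) / x i₀ ^ 2 := by gcongr
    _ = ∑ i ∈ s, (x i - y i) / x i ^ 2 := by rw [← off_i₀, sum_erase_add s _ hi₀]

end Convexity

section FourierTransform

variable {n : ℕ} [NeZero n]

theorem sum_norm_sq_zmodDFT (Φ : ZMod n → ℂ) :
    ∑ k, ‖ZMod.dft Φ k‖ ^ 2 = n * ∑ j, ‖Φ j‖ ^ 2 := by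
  have conj_dft (k : ZMod n) : starRingEnd ℂ (ZMod.dft Φ k)
      = ∑ j, ZMod.stdAddChar (j * k) * starRingEnd ℂ (Φ j) := by
    simp only [ZMod.dft_apply, smul_eq_mul, map_sum, map_mul, ← AddChar.map_neg_eq_conj, neg_neg]
  have complex_form : ∑ k, ZMod.dft Φ k * starRingEnd ℂ (ZMod.dft Φ k)
      = n * ∑ j, Φ j * starRingEnd ℂ (Φ j) :=
    calc ∑ k, ZMod.dft Φ k * starRingEnd ℂ (ZMod.dft Φ k)
        = ∑ k, ∑ j, ZMod.stdAddChar (-(k * -j)) * ZMod.dft Φ k * starRingEnd ℂ (Φ j) := by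
          refine sum_congr rfl fun k _ ↦ ?_
          rw [conj_dft, mul_sum]
          refine sum_congr rfl fun j _ ↦ ?_
          rw [mul_neg, neg_neg, mul_comm k j]
          ring
      _ = ∑ j, ZMod.dft (ZMod.dft Φ) (-j) * starRingEnd ℂ (Φ j) := by
          rw [sum_comm]
          simp only [← sum_mul, ZMod.dft_apply (ZMod.dft Φ), smul_eq_mul]
      _ = n * ∑ j, Φ j * starRingEnd ℂ (Φ j) := by
          simp only [ZMod.dft_dft, neg_neg, smul_eq_mul, mul_sum, mul_assoc]
  simp only [Complex.mul_conj'] at complex_form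
  exact_mod_cast complex_form

theorem finEquiv_apply_eq_natCast (i : Fin n) : ZMod.finEquiv n i = ((i : ℕ) : ZMod n) := by
  apply ZMod.val_injective n
  rw [ZMod.val_natCast_of_lt i.isLt]
  obtain _ | m := n
  · exact i.elim0
  · rfl

theorem dft_eq_zmodDFT (a : Fin n → ℝ) (j : Fin n) :
    dft a j = ZMod.dft (fun i ↦ (a ((ZMod.finEquiv n).symm i) : ℂ)) (ZMod.finEquiv n j) := by
  rw [ZMod.dft_apply, dft]
  refine Fintype.sum_equiv (ZMod.finEquiv n).toEquiv _ _ fun i ↦ ?_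
  have phase : -(ZMod.finEquiv n i * ZMod.finEquiv n j)
      = ((-((i : ℕ) * (j : ℕ) : ℤ) : ℤ) : ZMod n) := by
    simp only [finEquiv_apply_eq_natCast]
    push_cast
    rfl
  simp only [RingEquiv.toEquiv_eq_coe, EquivLike.coe_coe, RingEquiv.symm_apply_apply, phase,
    ZMod.stdAddChar_coe, smul_eq_mul]
  rw [mul_comm]
  congr 2
  push_cast
  ring

theorem sum_norm_sq_dft (a : Fin n → ℝ) : ∑ j, ‖dft a j‖ ^ 2 = n * ∑ i, a i ^ 2 := by
  have parseval := sum_norm_sq_zmodDFT fun i ↦ (a ((ZMod.finEquiv n).symm i) : ℂ)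
  rw [← (ZMod.finEquiv n).toEquiv.sum_comp, ← (ZMod.finEquiv n).toEquiv.sum_comp] at parseval
  simpa [dft_eq_zmodDFT] using parseval

theorem dft_zero (a : Fin n → ℝ) : dft a 0 = ((∑ i, a i : ℝ) : ℂ) := by
  simp [dft]

end FourierTransform

section QuadraticResidues

variable {F : Type*} [Field F] [Fintype F] [DecidableEq F]

theorem two_mul_sum_isSquare {R : Type*} [Ring R] (f : F → R) :
    2 * ∑ x with IsSquare x, f x = ∑ x, f x + ∑ x, quadraticChar F x * f x + f 0 := by
  have pointwise (x : F) : 2 * (if IsSquare x then f x else 0)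
      = f x + quadraticChar F x * f x + if x = 0 then f x else 0 := by
    obtain rfl | hx := eq_or_ne x 0
    · simp [two_mul]
    by_cases hsq : IsSquare x
    · simp [hsq, hx, (quadraticChar_one_iff_isSquare hx).2 hsq, two_mul]
    · simp [hsq, hx, quadraticChar_neg_one_iff_not_isSquare.2 hsq]
  simp only [sum_filter, mul_sum, pointwise, sum_add_distrib, sum_ite_eq', mem_univ, if_true]

theorem two_mul_card_isSquare (hF : ringChar F ≠ 2) :
    2 * #{x : F | IsSquare x} = Fintype.card F + 1 := by
  have count := two_mul_sum_isSquare fun _ : F ↦ (1 : ℤ)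
  simp only [Int.cast_id, mul_one, quadraticChar_sum_zero hF, add_zero, sum_const, nsmul_eq_mul,
    card_univ] at count
  exact_mod_cast count

theorem two_mul_sum_isSquare_addChar {R : Type*} [CommRing R] [IsDomain R] {ψ : AddChar F R}
    (hψ : ψ ≠ 1) :
    2 * ∑ x with IsSquare x, ψ x
      = 1 + gaussSum ((quadraticChar F).ringHomComp (Int.castRingHom R)) ψ := by
  rw [two_mul_sum_isSquare, AddChar.sum_eq_zero_of_ne_one hψ, AddChar.map_zero_eq_one, zero_add,
    add_comm]
  rfl

theorem ringChar_ne_two_of_card_mod_four_eq_three {K : Type*} [Field K] [Fintype K]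
    (hK : Fintype.card K % 4 = 3) : ringChar K ≠ 2 := fun hchar ↦ by
  have := FiniteField.even_card_of_char_two hchar
  omega

theorem gaussSum_quadraticChar_sq_of_card_mod_four_eq_three {R : Type*} [CommRing R] [IsDomain R]
    [CharZero R] {ψ : AddChar F R} (hF : Fintype.card F % 4 = 3) (hψ : ψ ≠ 1) :
    gaussSum ((quadraticChar F).ringHomComp (Int.castRingHom R)) ψ ^ 2 = -Fintype.card F := by
  have hchar : ringChar F ≠ 2 := ringChar_ne_two_of_card_mod_four_eq_three hF
  have ne_one : (quadraticChar F).ringHomComp (Int.castRingHom R) ≠ 1 :=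
    (MulChar.ringHomComp_ne_one_iff (RingHom.injective_int _)).2 (quadraticChar_ne_one hchar)
  have at_neg_one : quadraticChar F (-1) = -1 := by
    rw [quadraticChar_neg_one hchar, ZMod.χ₄_nat_three_mod_four hF]
  rw [gaussSum_sq ne_one ((quadraticChar_isQuadratic F).comp _) (.of_ne_one hψ)]
  simp [MulChar.ringHomComp_apply, at_neg_one]

theorem norm_one_add_sq_of_sq_eq_neg {z : ℂ} {r : ℝ} (hr : 0 ≤ r) (hz : z ^ 2 = -r) :
    ‖1 + z‖ ^ 2 = 1 + r := by
  have sq_sqrt : z ^ 2 = (Real.sqrt r * Complex.I) ^ 2 := by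
    rw [hz, mul_pow, Complex.I_sq, ← Complex.ofReal_pow, Real.sq_sqrt hr, mul_neg_one]
  obtain rfl | rfl := sq_eq_sq_iff_eq_or_eq_neg.1 sq_sqrt
  all_goals
    rw [← Complex.normSq_eq_norm_sq, Complex.normSq_apply]
    simp [Real.mul_self_sqrt hr]

theorem norm_sum_isSquare_addChar_sq {ψ : AddChar F ℂ} (hF : Fintype.card F % 4 = 3)
    (hψ : ψ ≠ 1) :
    ‖∑ x with IsSquare x, ψ x‖ ^ 2 = ((Fintype.card F : ℝ) + 1) / 4 := by
  have double := norm_one_add_sq_of_sq_eq_neg (Nat.cast_nonneg (Fintype.card F))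
    (gaussSum_quadraticChar_sq_of_card_mod_four_eq_three hF hψ)
  rw [← two_mul_sum_isSquare_addChar hψ, norm_mul, mul_pow, Complex.norm_ofNat] at double
  linarith

end QuadraticResidues

/-- Apertures with the transmissivity and power spectrum of the indicator of an
`(n, (n + 1) / 2, (n + 1) / 4)` (Paley–Hadamard) cyclic difference set: all frequencies but `0`
carry the same power. This is all that the factor-two comparison needs of the aperture. -/
structure IsHadamardFlat {n : ℕ} [NeZero n] (a : Fin n → ℝ) : Prop where
  sum_eq : ∑ i, a i = ((n : ℝ) + 1) / 2
  norm_dft_sq : ∀ j ≠ 0, ‖dft a j‖ ^ 2 = ((n : ℝ) + 1) / 4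

/-- The binary aperture which is open at the squares modulo `n`, `0` included; for primes
`n ≡ 3 (mod 4)` it is Hadamard flat. -/
noncomputable def residueAperture (n : ℕ) [NeZero n] (i : Fin n) : ℝ :=
  if IsSquare (ZMod.finEquiv n i) then 1 else 0

theorem residueAperture_mem_Icc {n : ℕ} [NeZero n] (i : Fin n) :
    residueAperture n i ∈ Set.Icc (0 : ℝ) 1 := by
  unfold residueAperture
  split_ifs <;> simp

theorem sum_residueAperture (n : ℕ) [NeZero n] :
    ∑ i, residueAperture n i = #{x : ZMod n | IsSquare x} := by
  rw [← (ZMod.finEquiv n).symm.toEquiv.sum_comp]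
  simp [residueAperture]

theorem dft_residueAperture (n : ℕ) [NeZero n] (j : Fin n) :
    dft (residueAperture n) j
      = ∑ x : ZMod n with IsSquare x, ZMod.stdAddChar.mulShift (-ZMod.finEquiv n j) x := by
  rw [dft_eq_zmodDFT, ZMod.dft_apply, sum_filter]
  refine sum_congr rfl fun x _ ↦ ?_
  split_ifs with hx <;> simp [residueAperture, hx, mul_comm x]

theorem isHadamardFlat_residueAperture {p : ℕ} [Fact p.Prime] (hp : p % 4 = 3) :
    IsHadamardFlat (residueAperture p) where
  sum_eq := by
    have hcard : Fintype.card (ZMod p) % 4 = 3 := by rwa [ZMod.card]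
    have count : (2 * #{x : ZMod p | IsSquare x} : ℝ) = p + 1 := by
      exact_mod_cast ZMod.card p ▸
        two_mul_card_isSquare (ringChar_ne_two_of_card_mod_four_eq_three hcard)
    rw [sum_residueAperture]
    linarith
  norm_dft_sq j hj := by
    have hψ : ZMod.stdAddChar.mulShift (-ZMod.finEquiv p j) ≠ 1 :=
      ZMod.isPrimitive_stdAddChar p (by simpa using hj)
    rw [dft_residueAperture, norm_sum_isSquare_addChar_sq (by rwa [ZMod.card]) hψ, ZMod.card]

section LMMSE

variable {n : ℕ} {t W J : ℝ}

/-- The signal-to-noise ratio `γ‖dft a i‖²` at frequency `i`, through which the aperture enters the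
LMMSE. -/
noncomputable def snr (t W J : ℝ) (a : Fin n → ℝ) (i : Fin n) : ℝ :=
  t / (n * (W + J * transmissivity a)) * ‖dft a i‖ ^ 2

/-- The average over all frequencies of the signal-to-noise ratio of a binary aperture of
transmissivity `ρ`; by Parseval it depends on the aperture only through `ρ`. -/
noncomputable def meanSNR (t W J ρ : ℝ) : ℝ :=
  t * ρ / (W + J * ρ)

theorem lmmse_const (t W J θ : ℝ) (a : Fin n → ℝ) :
    lmmse n t W J (fun _ ↦ θ) a = ∑ i, 1 / (1 / θ + snr t W J a i) :=
  rfl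

theorem meanSNR_nonneg (ht : 0 ≤ t) (hW : 0 ≤ W) (hJ : 0 ≤ J) {ρ : ℝ} (hρ : 0 ≤ ρ) :
    0 ≤ meanSNR t W J ρ := by
  unfold meanSNR
  positivity

theorem meanSNR_le_mul_meanSNR (ht : 0 ≤ t) (hW : 0 < W) (hJ : 0 ≤ J) {c ρ σ : ℝ} (hc : 1 ≤ c)
    (hρ : 0 ≤ ρ) (hσ : 0 ≤ σ) (h : ρ ≤ c * σ) : meanSNR t W J ρ ≤ c * meanSNR t W J σ := by
  unfold meanSNR
  rw [← mul_div_assoc, div_le_div_iff₀ (by positivity) (by positivity)]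
  have main_term : t * W * ρ ≤ t * W * (c * σ) := by gcongr
  have cross_term : 1 * (t * J * ρ * σ) ≤ c * (t * J * ρ * σ) := by gcongr
  linarith

theorem transmissivity_nonneg {a : Fin n → ℝ} (ha : ∀ i, 0 ≤ a i) : 0 ≤ transmissivity a :=
  mul_nonneg (by positivity) (sum_nonneg fun i _ ↦ ha i)

theorem transmissivity_le_one {a : Fin n → ℝ} (ha : ∀ i, a i ≤ 1) : transmissivity a ≤ 1 := by
  have sum_le : ∑ i, a i ≤ n := by simpa using sum_le_card_nsmul univ a 1 fun i _ ↦ ha i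
  rw [transmissivity, one_div_mul_eq_div]
  exact div_le_one_of_le₀ sum_le n.cast_nonneg

theorem snr_nonneg (ht : 0 ≤ t) (hW : 0 ≤ W) (hJ : 0 ≤ J) {a : Fin n → ℝ} (ha : ∀ i, 0 ≤ a i)
    (i : Fin n) : 0 ≤ snr t W J a i := by
  have := transmissivity_nonneg ha
  unfold snr
  positivity

variable [NeZero n]

theorem sum_eq_mul_transmissivity (a : Fin n → ℝ) : ∑ i, a i = n * transmissivity a := by
  rw [transmissivity, one_div, mul_inv_cancel_left₀ (NeZero.ne _)]

theorem sum_snr_le (ht : 0 ≤ t) (hW : 0 ≤ W) (hJ : 0 ≤ J) {a : Fin n → ℝ}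
    (ha : ∀ i, a i ∈ Set.Icc (0 : ℝ) 1) :
    ∑ i, snr t W J a i ≤ n * meanSNR t W J (transmissivity a) := by
  have hρ := transmissivity_nonneg fun i ↦ (ha i).1
  have hn : (n : ℝ) ≠ 0 := NeZero.ne _
  calc ∑ i, snr t W J a i
      = t / (n * (W + J * transmissivity a)) * (n * ∑ i, a i ^ 2) := by
        simp only [snr, ← mul_sum, sum_norm_sq_dft]
    _ ≤ t / (n * (W + J * transmissivity a)) * (n * ∑ i, a i) := by
        gcongr with i
        exact pow_le_of_le_one (ha i).1 (ha i).2 two_ne_zero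
    _ = n * meanSNR t W J (transmissivity a) := by
        rw [sum_eq_mul_transmissivity, meanSNR]
        field_simp

theorem sum_snr_le_of_transmissivity_le (ht : 0 ≤ t) (hW : 0 < W) (hJ : 0 ≤ J) {a : Fin n → ℝ}
    (ha : ∀ i, a i ∈ Set.Icc (0 : ℝ) 1) {ρ : ℝ} (h : transmissivity a ≤ ρ) :
    ∑ i, snr t W J a i ≤ n * meanSNR t W J ρ := by
  have hρa : 0 ≤ transmissivity a := transmissivity_nonneg fun i ↦ (ha i).1
  have mono : meanSNR t W J (transmissivity a) ≤ meanSNR t W J ρ := by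
    simpa only [one_mul] using
      meanSNR_le_mul_meanSNR ht hW hJ le_rfl hρa (hρa.trans h) (by rwa [one_mul])
  exact (sum_snr_le ht hW.le hJ ha).trans (by gcongr)

theorem snr_zero (t W J : ℝ) (a : Fin n → ℝ) :
    snr t W J a 0 = n * transmissivity a * meanSNR t W J (transmissivity a) := by
  have hn : (n : ℝ) ≠ 0 := NeZero.ne _
  rw [snr, dft_zero, Complex.norm_real, Real.norm_eq_abs, sq_abs, sum_eq_mul_transmissivity,
    meanSNR]
  field_simp

theorem sum_erase_zero_snr_le (ht : 0 ≤ t) (hW : 0 ≤ W) (hJ : 0 ≤ J) {a : Fin n → ℝ}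
    (ha : ∀ i, a i ∈ Set.Icc (0 : ℝ) 1) :
    ∑ i ∈ univ.erase 0, snr t W J a i
      ≤ n * (1 - transmissivity a) * meanSNR t W J (transmissivity a) := by
  have total := sum_snr_le ht hW hJ ha
  rw [← sum_erase_add univ _ (mem_univ 0), snr_zero] at total
  linarith

namespace IsHadamardFlat

variable {a : Fin n → ℝ}

theorem two_mul_transmissivity (ha : IsHadamardFlat a) : 2 * (n * transmissivity a) = n + 1 := by
  rw [← sum_eq_mul_transmissivity, ha.sum_eq]
  ring

theorem one_lt_two_mul_transmissivity (ha : IsHadamardFlat a) : 1 < 2 * transmissivity a := by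
  have hn : (0 : ℝ) < n := Nat.cast_pos.2 (NeZero.pos n)
  refine lt_of_mul_lt_mul_left ?_ hn.le
  linarith [ha.two_mul_transmissivity]

theorem snr_two_mul_zero (ha : IsHadamardFlat a) (t W J : ℝ) :
    snr (2 * t) W J a 0 = (n + 1) * meanSNR t W J (transmissivity a) := by
  rw [snr_zero, ← ha.two_mul_transmissivity, meanSNR, meanSNR]
  ring

theorem snr_two_mul_of_ne_zero (ha : IsHadamardFlat a) (t W J : ℝ) {j : Fin n} (hj : j ≠ 0) :
    snr (2 * t) W J a j = meanSNR t W J (transmissivity a) := by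
  have hn : (n : ℝ) ≠ 0 := NeZero.ne _
  rw [snr, ha.norm_dft_sq j hj, ← ha.two_mul_transmissivity, meanSNR]
  field_simp
  ring

theorem sum_erase_zero_snr_two_mul (ha : IsHadamardFlat a) (t W J : ℝ) :
    ∑ i ∈ univ.erase 0, snr (2 * t) W J a i = (n - 1) * meanSNR t W J (transmissivity a) := by
  rw [sum_congr rfl fun i hi ↦ ha.snr_two_mul_of_ne_zero t W J (ne_of_mem_erase hi), sum_const,
    card_erase_of_mem (mem_univ 0), card_univ, Fintype.card_fin, nsmul_eq_mul,
    Nat.cast_pred (NeZero.pos n)]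

theorem sum_snr_two_mul (ha : IsHadamardFlat a) (t W J : ℝ) :
    ∑ i, snr (2 * t) W J a i = 2 * n * meanSNR t W J (transmissivity a) := by
  rw [← sum_erase_add univ _ (mem_univ 0), ha.sum_erase_zero_snr_two_mul, ha.snr_two_mul_zero]
  ring

theorem meanSNR_le_snr_two_mul (ha : IsHadamardFlat a) (ht : 0 ≤ t) (hW : 0 ≤ W) (hJ : 0 ≤ J)
    (i : Fin n) : meanSNR t W J (transmissivity a) ≤ snr (2 * t) W J a i := by
  obtain rfl | hi := eq_or_ne i 0
  · have hρ : 0 ≤ transmissivity a := by linarith [ha.one_lt_two_mul_transmissivity]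
    rw [ha.snr_two_mul_zero]
    exact le_mul_of_one_le_left (meanSNR_nonneg ht hW hJ hρ) (by simp)
  · exact (ha.snr_two_mul_of_ne_zero t W J hi).ge

variable {b : Fin n → ℝ}

theorem meanSNR_le_two_mul_meanSNR (ha : IsHadamardFlat a) (ht : 0 ≤ t) (hW : 0 < W) (hJ : 0 ≤ J)
    (hb : ∀ i, b i ∈ Set.Icc (0 : ℝ) 1) :
    meanSNR t W J (transmissivity b) ≤ 2 * meanSNR t W J (transmissivity a) := by
  have hρa := ha.one_lt_two_mul_transmissivity
  have hρb : transmissivity b ≤ 1 := transmissivity_le_one fun i ↦ (hb i).2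
  exact meanSNR_le_mul_meanSNR ht hW hJ one_le_two (transmissivity_nonneg fun i ↦ (hb i).1)
    (by linarith) (by linarith)

theorem sum_snr_le_sum_snr_two_mul (ha : IsHadamardFlat a) (ht : 0 ≤ t) (hW : 0 < W) (hJ : 0 ≤ J)
    (hb : ∀ i, b i ∈ Set.Icc (0 : ℝ) 1) :
    ∑ i, snr t W J b i ≤ ∑ i, snr (2 * t) W J a i :=
  calc ∑ i, snr t W J b i
      ≤ n * meanSNR t W J (transmissivity b) := sum_snr_le ht hW.le hJ hb
    _ ≤ n * (2 * meanSNR t W J (transmissivity a)) := by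
        gcongr
        exact ha.meanSNR_le_two_mul_meanSNR ht hW hJ hb
    _ = ∑ i, snr (2 * t) W J a i := by
        rw [ha.sum_snr_two_mul]
        ring

theorem sum_erase_zero_snr_le_sum_erase_zero_snr_two_mul (ha : IsHadamardFlat a) (ht : 0 ≤ t)
    (hW : 0 < W) (hJ : 0 ≤ J) (hb : ∀ i, b i ∈ Set.Icc (0 : ℝ) 1)
    (h : transmissivity a ≤ transmissivity b) :
    ∑ i ∈ univ.erase 0, snr t W J b i ≤ ∑ i ∈ univ.erase 0, snr (2 * t) W J a i := by
  have hρb : 0 ≤ 1 - transmissivity b := sub_nonneg.2 (transmissivity_le_one fun i ↦ (hb i).2)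
  have hρa : 0 ≤ transmissivity a := by linarith [ha.one_lt_two_mul_transmissivity]
  calc ∑ i ∈ univ.erase 0, snr t W J b i
      ≤ n * (1 - transmissivity b) * meanSNR t W J (transmissivity b) :=
        sum_erase_zero_snr_le ht hW.le hJ hb
    _ ≤ n * (1 - transmissivity b) * (2 * meanSNR t W J (transmissivity a)) := by
        gcongr
        exact ha.meanSNR_le_two_mul_meanSNR ht hW hJ hb
    _ ≤ n * (1 - transmissivity a) * (2 * meanSNR t W J (transmissivity a)) := by
        have := meanSNR_nonneg ht hW.le hJ hρa
        gcongr
    _ = (n - 1) * meanSNR t W J (transmissivity a) := by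
        linear_combination
          (-meanSNR t W J (transmissivity a)) * ha.two_mul_transmissivity
    _ = ∑ i ∈ univ.erase 0, snr (2 * t) W J a i := (ha.sum_erase_zero_snr_two_mul t W J).symm

theorem lmmse_two_mul_le (ha : IsHadamardFlat a) (ht : 0 ≤ t) (hW : 0 < W) (hJ : 0 ≤ J) {θ : ℝ}
    (hθ : 0 < θ) (hb : ∀ i, b i ∈ Set.Icc (0 : ℝ) 1) :
    lmmse n (2 * t) W J (fun _ ↦ θ) a ≤ lmmse n t W J (fun _ ↦ θ) b := by
  have hρa : 0 ≤ transmissivity a := by linarith [ha.one_lt_two_mul_transmissivity]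
  have level_pos : 0 < 1 / θ + meanSNR t W J (transmissivity a) :=
    add_pos_of_pos_of_nonneg (one_div_pos.2 hθ) (meanSNR_nonneg ht hW.le hJ hρa)
  have snr_b_pos : ∀ i ∈ univ, 0 < 1 / θ + snr t W J b i := fun i _ ↦
    add_pos_of_pos_of_nonneg (one_div_pos.2 hθ) (snr_nonneg ht hW.le hJ (fun i ↦ (hb i).1) i)
  have level_le (i : Fin n) :
      1 / θ + meanSNR t W J (transmissivity a) ≤ 1 / θ + snr (2 * t) W J a i :=
    add_le_add_right (ha.meanSNR_le_snr_two_mul ht hW.le hJ i) (1 / θ)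
  rw [lmmse_const, lmmse_const]
  obtain hle | hle := le_total (transmissivity b) (transmissivity a)
  · refine sum_one_div_le_sum_one_div_of_sum_le_card_mul level_pos (fun i _ ↦ level_le i)
      snr_b_pos ?_
    rw [sum_add_distrib, sum_const, nsmul_eq_mul, card_univ, Fintype.card_fin, mul_add]
    gcongr
    exact sum_snr_le_of_transmissivity_le ht hW hJ hb hle
  · refine sum_one_div_le_sum_one_div_of_two_level (mem_univ 0) level_pos (fun i hi ↦ ?_)
      (level_le 0) snr_b_pos ?_ ?_
    · rw [ha.snr_two_mul_of_ne_zero t W J (ne_of_mem_erase hi)]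
    · rw [sum_add_distrib, sum_add_distrib]
      exact add_le_add_right
        (ha.sum_erase_zero_snr_le_sum_erase_zero_snr_two_mul ht hW hJ hb hle) _
    · rw [sum_add_distrib, sum_add_distrib]
      exact add_le_add_right (ha.sum_snr_le_sum_snr_two_mul ht hW hJ hb) _

theorem goodApertureSize (ha : IsHadamardFlat a) (ha01 : ∀ i, a i ∈ Set.Icc (0 : ℝ) 1) :
    GoodApertureSize n := by
  intro t W J θ ht hW hJ hθ
  refine ⟨a, ha01, le_csInf ⟨_, a, ha01, rfl⟩ ?_⟩
  rintro _ ⟨b, hb, rfl⟩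
  exact ha.lmmse_two_mul_le ht.le hW hJ.le (div_pos hθ (Nat.cast_pos.2 (NeZero.pos n))) hb

end IsHadamardFlat

end LMMSE

/-- Prop. 2: there are infinitely many positive integers `n` (in particular all primes
`p ≡ 3 (mod 4)`) for which doubling the exposure time suffices for some binary
(quadratic-residue based) aperture to match the optimal LMMSE on i.i.d. scenes. -/
theorem spectrally_flat_factor_two
    : (∀ p : ℕ, p.Prime → p % 4 = 3 → GoodApertureSize p) ∧
      {n : ℕ | 0 < n ∧ GoodApertureSize n}.Infinite := by
  have good_of_prime : ∀ p : ℕ, p.Prime → p % 4 = 3 → GoodApertureSize p := fun p hp hmod ↦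
    have : Fact p.Prime := ⟨hp⟩
    (isHadamardFlat_residueAperture hmod).goodApertureSize residueAperture_mem_Icc
  refine ⟨good_of_prime, ?_⟩
  have infinite_primes : {p : ℕ | p.Prime ∧ p ≡ 3 [MOD 4]}.Infinite :=
    Nat.infinite_setOfPred_prime_and_modEq (by norm_num) (by norm_num)
  refine infinite_primes.mono ?_
  rintro p ⟨hp, hmod⟩
  exact ⟨hp.pos, good_of_prime p hp hmod⟩
end

section
/- (Nazarov's theorem, specialized to the real DFT basis and the sup norm.) Let n ≥ 1 and let M(n) = (3π/2)β(n)^{−2}. Let p_0, p_1, …, p_{n−1} be nonnegative reals with ∑_{j=0}^{n−1} p_j = 1. Then there exists b ∈ ℝ^n with |b_i| ≤ M(n) for all i = 0,…,n−1 such that |(b, ψ_j)|² ≥ p_j for all j = 0,…,n−1, where (u,v) = (1/n)∑_{i=0}^{n−1} u_i v_i. -/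
/-- The real DFT orthonormal basis vectors: with `ω = 2π/n` and `h = ⌈(n-1)/2⌉ = n/2`
(natural division), `ψ_0(i) = 1`, `ψ_j(i) = √2 cos(ωji)` for `0 < j < h`,
`ψ_h(i) = cos(ωhi)` if `n` even and `√2 cos(ωhi)` if `n` odd, and
`ψ_j(i) = √2 sin(ωji)` for `h < j < n`. -/
noncomputable def psi (n : ℕ) (j i : ℕ) : ℝ :=
  if j = 0 then 1
  else if j < n / 2 then Real.sqrt 2 * Real.cos (2 * Real.pi / n * j * i)
  else if j = n / 2 then
    (if n % 2 = 0 then Real.cos (2 * Real.pi / n * j * i)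
     else Real.sqrt 2 * Real.cos (2 * Real.pi / n * j * i))
  else Real.sqrt 2 * Real.sin (2 * Real.pi / n * j * i)

/-- Normalized ℓ¹ norm `(1/n) ∑_{i<n} |ψ_j(i)|` of the `j`-th real DFT basis vector. -/
noncomputable def l1psi (n j : ℕ) : ℝ := (1 / (n : ℝ)) * ∑ i ∈ Finset.range n, |psi n j i|

/-- `β(n) = min_{0 ≤ j < n} (1/n) ∑_i |ψ_j(i)|`. -/
noncomputable def beta (n : ℕ) : ℝ := sInf {x | ∃ j < n, x = l1psi n j}

/-- Nazarov's constant `M(n) = (3π/2) β(n)⁻²`. -/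
noncomputable def Mnaz (n : ℕ) : ℝ := (3 * Real.pi / 2) / (beta n) ^ 2

/-!
Let `Φ` be the primitive of `arctan`. Among all choices of signs, take the one for which
`f = ∑ j, ± √(p j) φ j` maximizes `∫ Φ(f)`, and let `b` be a multiple of `arctan f`. Flipping the
sign of the `j`-th term changes `f` by `∓ 2 √(p j) φ j` and does not increase `∫ Φ(f)`. As `Φ` is
convex with second derivative `1 / (1 + t ^ 2)`, comparing `∫ Φ(f)` before and after the flip to
second order bounds `(arctan f, φ j)` from below, where the loss from the weight `1 / (1 + t ^ 2)`
is controlled by the Cauchy–Schwarz inequality and `‖f‖₂ ≤ 1`.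
-/

section SecondOrder

open Set Real

lemma convexOn_add_mul_sub_le_of_hasDerivAt {s : Set ℝ} {f : ℝ → ℝ} {f' x y : ℝ}
    (hf : ConvexOn ℝ s f) (hx : x ∈ s) (hy : y ∈ s) (hf' : HasDerivAt f f' x) :
    f x + f' * (y - x) ≤ f y := by
  rcases lt_trichotomy x y with hxy | rfl | hyx
  · have h := hf.le_slope_of_hasDerivAt hx hy hxy hf'
    rw [slope_def_field, le_div_iff₀ (sub_pos.2 hxy)] at h
    linarith
  · simp
  · have h := hf.slope_le_of_hasDerivAt hy hx hyx hf'
    rw [slope_def_field, div_le_iff₀ (sub_pos.2 hyx)] at h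
    linarith

lemma add_mul_sub_add_sq_le_of_le_second_deriv {f f' f'' : ℝ → ℝ} {m x y : ℝ}
    (hf : ∀ t ∈ uIcc x y, HasDerivAt f (f' t) t) (hf' : ∀ t ∈ uIcc x y, HasDerivAt f' (f'' t) t)
    (hm : ∀ t ∈ uIcc x y, m ≤ f'' t) :
    f x + f' x * (y - x) + m / 2 * (y - x) ^ 2 ≤ f y := by
  have hg : ∀ t ∈ uIcc x y, HasDerivAt (fun t ↦ f t - m / 2 * t ^ 2) (f' t - m * t) t := by
    intro t ht
    exact ((hf t ht).sub ((hasDerivAt_pow 2 t).const_mul (m / 2))).congr_deriv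
      (by push_cast; ring)
  have hg' : ∀ t ∈ uIcc x y, HasDerivAt (fun t ↦ f' t - m * t) (f'' t - m) t := by
    intro t ht
    exact ((hf' t ht).sub ((hasDerivAt_id t).const_mul m)).congr_deriv (by simp)
  have hconvex : ConvexOn ℝ (uIcc x y) fun t ↦ f t - m / 2 * t ^ 2 :=
    convexOn_of_hasDerivWithinAt2_nonneg (convex_uIcc x y)
      (fun t ht ↦ (hg t ht).continuousAt.continuousWithinAt)
      (fun t ht ↦ (hg t (interior_subset ht)).hasDerivWithinAt)
      (fun t ht ↦ (hg' t (interior_subset ht)).hasDerivWithinAt)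
      fun t ht ↦ sub_nonneg.2 (hm t (interior_subset ht))
  have := convexOn_add_mul_sub_le_of_hasDerivAt hconvex left_mem_uIcc right_mem_uIcc
    (hg x left_mem_uIcc)
  linarith

/-- The primitive `Φ` of `arctan` with `Φ 0 = 0`, whose mean is maximized over the choices of
signs. -/
noncomputable def arctanPrimitive (x : ℝ) : ℝ := x * arctan x - log (1 + x ^ 2) / 2

lemma hasDerivAt_arctanPrimitive (x : ℝ) : HasDerivAt arctanPrimitive (arctan x) x := by
  have hx : 1 + x ^ 2 ≠ 0 := by positivity
  have hmul := (hasDerivAt_id x).mul (hasDerivAt_arctan x)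
  have hlog := (((hasDerivAt_pow 2 x).const_add 1).log hx).div_const 2
  refine (hmul.sub hlog).congr_deriv ?_
  simp only [id_eq, Nat.cast_ofNat, Nat.add_one_sub_one, pow_one]
  field_simp
  ring

lemma continuous_arctanPrimitive : Continuous arctanPrimitive :=
  continuous_iff_continuousAt.2 fun x ↦ (hasDerivAt_arctanPrimitive x).continuousAt

lemma sq_le_sq_add_sq_of_mem_uIcc {x y t : ℝ} (ht : t ∈ uIcc x y) : t ^ 2 ≤ x ^ 2 + y ^ 2 := by
  have habs : |t| ≤ max |x| |y| := by
    rcases mem_uIcc.1 ht with ⟨hx, hy⟩ | ⟨hy, hx⟩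
    · exact abs_le_max_abs_abs hx hy
    · exact max_comm |x| |y| ▸ abs_le_max_abs_abs hy hx
  rcases le_max_iff.1 habs with h | h
  · linarith [sq_le_sq.2 h, sq_nonneg y]
  · linarith [sq_le_sq.2 h, sq_nonneg x]

lemma arctan_mul_sub_add_sq_div_le (x y : ℝ) :
    arctan x * (y - x) + (y - x) ^ 2 / (1 + x ^ 2 + y ^ 2) / 2 ≤
      arctanPrimitive y - arctanPrimitive x := by
  have h := add_mul_sub_add_sq_le_of_le_second_deriv (x := x) (y := y)
    (m := 1 / (1 + x ^ 2 + y ^ 2)) (fun t _ ↦ hasDerivAt_arctanPrimitive t)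
    (fun t _ ↦ hasDerivAt_arctan t) fun t ht ↦
      one_div_le_one_div_of_le (by positivity) (by linarith [sq_le_sq_add_sq_of_mem_uIcc ht])
  have hquad : (y - x) ^ 2 / (1 + x ^ 2 + y ^ 2) / 2 =
      1 / (1 + x ^ 2 + y ^ 2) / 2 * (y - x) ^ 2 := by ring
  linarith

lemma abs_arctanPrimitive_le (x : ℝ) : |arctanPrimitive x| ≤ |arctan x * x| := by
  have hzero : arctanPrimitive 0 = 0 := by simp [arctanPrimitive]
  have hlower : 0 ≤ arctanPrimitive x := by
    have h := arctan_mul_sub_add_sq_div_le 0 x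
    have : 0 ≤ (x - 0) ^ 2 / (1 + 0 ^ 2 + x ^ 2) / 2 := by positivity
    rw [arctan_zero, hzero] at h
    linarith
  have hupper : arctanPrimitive x ≤ arctan x * x := by
    have h := arctan_mul_sub_add_sq_div_le x 0
    have : 0 ≤ (0 - x) ^ 2 / (1 + x ^ 2 + 0 ^ 2) / 2 := by positivity
    rw [hzero] at h
    linarith
  rw [abs_of_nonneg hlower]
  exact hupper.trans (le_abs_self _)

lemma abs_arctan_le (x : ℝ) : |arctan x| ≤ π / 2 :=
  abs_le.2 ⟨(neg_pi_div_two_lt_arctan x).le, (arctan_lt_pi_div_two x).le⟩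

end SecondOrder

section Signs

lemma exists_signs_forall_update_neg_le {ι α β : Type*} [Finite ι] [DecidableEq ι]
    [InvolutiveNeg α] [LinearOrder β] (F : (ι → α) → β) (a : ι → α) :
    ∃ c : ι → α, (∀ j, c j = a j ∨ c j = -a j) ∧
      ∀ k, F (Function.update c k (-c k)) ≤ F c := by
  have hfinite : {c : ι → α | ∀ j, c j ∈ ({a j, -a j} : Set α)}.Finite :=
    Set.Finite.pi' fun j ↦ Set.toFinite _
  obtain ⟨c, hc, hmax⟩ := hfinite.exists_maximalFor F _ ⟨a, fun j ↦ Or.inl rfl⟩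
  refine ⟨c, hc, fun k ↦ le_of_not_gt fun hlt ↦ hlt.not_ge (hmax (fun j ↦ ?_) hlt.le)⟩
  rcases eq_or_ne j k with rfl | hjk
  · rw [Function.update_self]
    rcases hc j with h | h
    · exact Or.inr (congrArg Neg.neg h)
    · exact Or.inl (neg_eq_iff_eq_neg.2 h)
  · rw [Function.update_of_ne hjk]
    exact hc j

lemma sum_update_neg_mul {ι R : Type*} [Fintype ι] [DecidableEq ι] [CommRing R]
    (c x : ι → R) (k : ι) :
    ∑ j, Function.update c k (-c k) j * x j = ∑ j, c j * x j - 2 * c k * x k := by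
  rw [← Finset.add_sum_erase _ _ (Finset.mem_univ k),
    ← Finset.add_sum_erase _ (fun j ↦ c j * x j) (Finset.mem_univ k), Function.update_self,
    Finset.sum_congr rfl fun j hj ↦ by rw [Function.update_of_ne (Finset.ne_of_mem_erase hj)]]
  ring

end Signs

section Nazarov

open MeasureTheory Real

variable {Ω : Type*} [MeasurableSpace Ω] {μ : Measure Ω}

lemma sq_integral_abs_le_integral_sq_div_mul_integral {g w : Ω → ℝ} (hw : ∀ x, 0 < w x)
    (hg : Integrable g μ) (hgw : Integrable (fun x ↦ g x ^ 2 / w x) μ)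
    (hw_int : Integrable w μ) :
    (∫ x, |g x| ∂μ) ^ 2 ≤ (∫ x, g x ^ 2 / w x ∂μ) * ∫ x, w x ∂μ := by
  have hquadratic : ∀ t : ℝ, 0 ≤ (∫ x, w x ∂μ) * (t * t) + (-2 * ∫ x, |g x| ∂μ) * t +
      ∫ x, g x ^ 2 / w x ∂μ := by
    intro t
    calc 0 ≤ ∫ x, (w x * t - |g x|) ^ 2 / w x ∂μ :=
          integral_nonneg fun x ↦ div_nonneg (sq_nonneg _) (hw x).le
      _ = ∫ x, (w x * (t * t) + -2 * |g x| * t + g x ^ 2 / w x) ∂μ := by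
          refine integral_congr_ae (.of_forall fun x ↦ ?_)
          have := (hw x).ne'
          simp only
          rw [← sq_abs (g x)]
          field_simp
          ring
      _ = _ := by
          have hlin := (hg.abs.const_mul (-2)).mul_const t
          have hquad_lin : Integrable (fun x ↦ w x * (t * t) + -2 * |g x| * t) μ :=
            (hw_int.mul_const _).add hlin
          rw [integral_add hquad_lin hgw, integral_add (hw_int.mul_const _) hlin,
            integral_mul_const, integral_mul_const, integral_const_mul]
  have := discrim_le_zero hquadratic
  rw [discrim] at this
  linarith

lemma integrable_arctan_mul {f g : Ω → ℝ} (hf : AEStronglyMeasurable f μ) (hg : Integrable g μ) :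
    Integrable (fun x ↦ arctan (f x) * g x) μ :=
  hg.bdd_mul (continuous_arctan.comp_aestronglyMeasurable hf)
    (.of_forall fun x ↦ abs_arctan_le (f x))

lemma integrable_arctanPrimitive {f : Ω → ℝ} (hf : Integrable f μ) :
    Integrable (fun x ↦ arctanPrimitive (f x)) μ :=
  (integrable_arctan_mul hf.1 hf).mono (continuous_arctanPrimitive.comp_aestronglyMeasurable hf.1)
    (.of_forall fun x ↦ abs_arctanPrimitive_le (f x))

lemma integrable_sub_sq_div {f h : Ω → ℝ} (hf : MemLp f 2 μ) (hh : MemLp h 2 μ) :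
    Integrable (fun x ↦ (h x - f x) ^ 2 / (1 + f x ^ 2 + h x ^ 2)) μ := by
  have hf_meas := hf.1.aemeasurable
  have hh_meas := hh.1.aemeasurable
  refine (hh.sub hf).integrable_sq.mono
    (by fun_prop : AEMeasurable _ μ).aestronglyMeasurable (.of_forall fun x ↦ ?_)
  rw [Real.norm_of_nonneg (by positivity), Real.norm_of_nonneg (sq_nonneg _)]
  exact div_le_self (sq_nonneg _) (by nlinarith)

lemma integral_arctan_mul_sub_add_le [IsFiniteMeasure μ] {f h : Ω → ℝ} (hf : MemLp f 2 μ)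
    (hh : MemLp h 2 μ) :
    ∫ x, arctan (f x) * (h x - f x) ∂μ +
        (∫ x, (h x - f x) ^ 2 / (1 + f x ^ 2 + h x ^ 2) ∂μ) / 2 ≤
      ∫ x, arctanPrimitive (h x) ∂μ - ∫ x, arctanPrimitive (f x) ∂μ := by
  have hf_int := hf.integrable one_le_two
  have hh_int := hh.integrable one_le_two
  have harctan := integrable_arctan_mul hf.1 (hh_int.sub hf_int)
  have hquot := (integrable_sub_sq_div hf hh).div_const 2
  rw [← integral_sub (integrable_arctanPrimitive hh_int) (integrable_arctanPrimitive hf_int),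
    ← integral_div]
  refine (integral_add harctan hquot).symm.trans_le (integral_mono (harctan.add hquot) ?_ ?_)
  · exact (integrable_arctanPrimitive hh_int).sub (integrable_arctanPrimitive hf_int)
  · exact fun x ↦ arctan_mul_sub_add_sq_div_le (f x) (h x)

lemma sq_integral_abs_sub_le_of_integral_arctanPrimitive_le [IsProbabilityMeasure μ]
    {f h : Ω → ℝ} (hf : MemLp f 2 μ) (hh : MemLp h 2 μ)
    (hle : ∫ x, arctanPrimitive (h x) ∂μ ≤ ∫ x, arctanPrimitive (f x) ∂μ) :
    (∫ x, |h x - f x| ∂μ) ^ 2 ≤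
      2 * (1 + ∫ x, f x ^ 2 ∂μ + ∫ x, h x ^ 2 ∂μ) * -∫ x, arctan (f x) * (h x - f x) ∂μ := by
  set w : Ω → ℝ := fun x ↦ 1 + f x ^ 2 + h x ^ 2
  have hw_pos : ∀ x, 0 < w x := fun x ↦ by positivity
  have hone_add_int : Integrable (fun x ↦ 1 + f x ^ 2) μ :=
    (integrable_const 1).add hf.integrable_sq
  have hw_int : Integrable w μ := hone_add_int.add hh.integrable_sq
  have hw_integral : ∫ x, w x ∂μ = 1 + ∫ x, f x ^ 2 ∂μ + ∫ x, h x ^ 2 ∂μ := by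
    rw [integral_add hone_add_int hh.integrable_sq,
      integral_add (integrable_const 1) hf.integrable_sq]
    simp
  have hcauchySchwarz := sq_integral_abs_le_integral_sq_div_mul_integral hw_pos
    ((hh.sub hf).integrable one_le_two) (integrable_sub_sq_div hf hh) hw_int
  have hsecondOrder := integral_arctan_mul_sub_add_le hf hh
  calc _ ≤ (∫ x, (h x - f x) ^ 2 / w x ∂μ) * ∫ x, w x ∂μ := hcauchySchwarz
    _ ≤ (2 * -∫ x, arctan (f x) * (h x - f x) ∂μ) * ∫ x, w x ∂μ :=
        mul_le_mul_of_nonneg_right (by linarith) (integral_nonneg fun x ↦ (hw_pos x).le)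
    _ = _ := by rw [hw_integral]; ring

variable {ι : Type*} [Fintype ι] {φ : ι → Ω → ℝ}

lemma memLp_sum_mul {q : ENNReal} (hφ : ∀ j, MemLp (φ j) q μ) (c : ι → ℝ) :
    MemLp (fun x ↦ ∑ j, c j * φ j x) q μ :=
  memLp_finsetSum _ fun j _ ↦ (hφ j).const_mul (c j)

variable [DecidableEq ι]

lemma integral_sq_sum_mul (hφ : ∀ j, MemLp (φ j) 2 μ)
    (horth : ∀ j k, ∫ x, φ j x * φ k x ∂μ = if j = k then 1 else 0) (c : ι → ℝ) :
    ∫ x, (∑ j, c j * φ j x) ^ 2 ∂μ = ∑ j, c j ^ 2 := by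
  have hint : ∀ j k, Integrable (fun x ↦ c j * c k * (φ j x * φ k x)) μ := fun j k ↦
    ((hφ j).integrable_mul (hφ k)).const_mul _
  calc ∫ x, (∑ j, c j * φ j x) ^ 2 ∂μ
      = ∫ x, ∑ j, ∑ k, c j * c k * (φ j x * φ k x) ∂μ := by
        simp only [sq, Finset.sum_mul_sum, mul_mul_mul_comm]
    _ = ∑ j, ∑ k, c j * c k * ∫ x, φ j x * φ k x ∂μ := by
        rw [integral_finsetSum _ fun j _ ↦ integrable_finsetSum _ fun k _ ↦ hint j k]
        refine Finset.sum_congr rfl fun j _ ↦ ?_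
        rw [integral_finsetSum _ fun k _ ↦ hint j k]
        simp only [integral_const_mul]
    _ = ∑ j, c j ^ 2 := by simp [horth, sq]

lemma sq_mul_sq_integral_abs_le_of_update_neg_le [IsProbabilityMeasure μ]
    (hφ : ∀ j, MemLp (φ j) 2 μ)
    (horth : ∀ j k, ∫ x, φ j x * φ k x ∂μ = if j = k then 1 else 0) {c : ι → ℝ} {k : ι}
    (hle : ∫ x, arctanPrimitive (∑ j, Function.update c k (-c k) j * φ j x) ∂μ ≤
      ∫ x, arctanPrimitive (∑ j, c j * φ j x) ∂μ) :
    c k ^ 2 * (∫ x, |φ k x| ∂μ) ^ 2 ≤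
      c k * ((1 + 2 * ∑ j, c j ^ 2) * ∫ x, arctan (∑ j, c j * φ j x) * φ k x ∂μ) := by
  have hstep := sq_integral_abs_sub_le_of_integral_arctanPrimitive_le
    (memLp_sum_mul hφ c) (memLp_sum_mul hφ _) hle
  have hdiff : ∀ x, ∑ j, Function.update c k (-c k) j * φ j x - ∑ j, c j * φ j x =
      -2 * c k * φ k x := fun x ↦ by rw [sum_update_neg_mul]; ring
  have hsq : ∑ j, Function.update c k (-c k) j ^ 2 = ∑ j, c j ^ 2 := by
    refine Finset.sum_congr rfl fun j _ ↦ ?_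
    rcases eq_or_ne j k with rfl | hjk <;> simp [*]
  simp only [hdiff, abs_mul, mul_left_comm (arctan _), integral_const_mul,
    integral_sq_sum_mul hφ horth, hsq] at hstep
  rw [mul_pow, mul_pow, sq_abs, sq_abs] at hstep
  linarith

lemma sq_le_div_sq_of_sq_mul_le {c m s : ℝ} (hm : 0 < m) (h : c ^ 2 * m ≤ c * s) :
    c ^ 2 ≤ (s / m) ^ 2 := by
  rcases eq_or_ne c 0 with rfl | hc
  · simpa using sq_nonneg (s / m)
  have hle : |c| * (|c| * m) ≤ |c| * |s| := by
    rw [← mul_assoc, abs_mul_abs_self, ← sq, ← abs_mul]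
    exact h.trans (le_abs_self _)
  rw [sq_le_sq, abs_div, abs_of_pos hm, le_div_iff₀ hm]
  exact le_of_mul_le_mul_left hle (abs_pos.2 hc)

theorem nazarov_coefficient_theorem_general [IsProbabilityMeasure μ]
    (hφ : ∀ j, MemLp (φ j) 2 μ)
    (horth : ∀ j k, ∫ x, φ j x * φ k x ∂μ = if j = k then 1 else 0)
    {β : ℝ} (hβ : 0 < β) (hφβ : ∀ j, β ≤ ∫ x, |φ j x| ∂μ)
    {p : ι → ℝ} (hp : ∀ j, 0 ≤ p j) (hsum : ∑ j, p j ≤ 1) :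
    ∃ b : Ω → ℝ, AEStronglyMeasurable b μ ∧ (∀ x, |b x| ≤ 3 * π / 2 / β ^ 2) ∧
      ∀ j, p j ≤ (∫ x, b x * φ j x ∂μ) ^ 2 := by
  obtain ⟨c, hc, hmax⟩ := exists_signs_forall_update_neg_le
    (fun c ↦ ∫ x, arctanPrimitive (∑ j, c j * φ j x) ∂μ) fun j ↦ √(p j)
  have hc_sq : ∀ j, c j ^ 2 = p j := fun j ↦ by rcases hc j with h | h <;> simp [h, hp j]
  have hc_sum : ∑ j, c j ^ 2 = ∑ j, p j := Finset.sum_congr rfl fun j _ ↦ hc_sq j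
  refine ⟨fun x ↦ 3 / β ^ 2 * arctan (∑ j, c j * φ j x),
    (continuous_arctan.comp_aestronglyMeasurable (memLp_sum_mul hφ c).1).const_mul _,
    fun x ↦ ?_, fun k ↦ ?_⟩
  · calc |3 / β ^ 2 * arctan (∑ j, c j * φ j x)|
        = 3 / β ^ 2 * |arctan (∑ j, c j * φ j x)| := by rw [abs_mul, abs_of_pos (by positivity)]
      _ ≤ 3 / β ^ 2 * (π / 2) := by gcongr; exact abs_arctan_le _
      _ = 3 * π / 2 / β ^ 2 := by ring
  · simp only [mul_assoc, integral_const_mul]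
    set A := ∫ x, arctan (∑ j, c j * φ j x) * φ k x ∂μ
    have hsum_nonneg : 0 ≤ ∑ j, p j := Finset.sum_nonneg fun j _ ↦ hp j
    have hcoeff : c k ^ 2 * β ^ 2 ≤ c k * ((1 + 2 * ∑ j, p j) * A) := by
      refine le_trans ?_ (hc_sum ▸ sq_mul_sq_integral_abs_le_of_update_neg_le hφ horth (hmax k))
      gcongr
      exact hφβ k
    calc p k = c k ^ 2 := (hc_sq k).symm
      _ ≤ ((1 + 2 * ∑ j, p j) * A / β ^ 2) ^ 2 :=
          sq_le_div_sq_of_sq_mul_le (by positivity) hcoeff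
      _ = (1 + 2 * ∑ j, p j) ^ 2 * (A / β ^ 2) ^ 2 := by ring
      _ ≤ 3 ^ 2 * (A / β ^ 2) ^ 2 := by gcongr; linarith
      _ = (3 / β ^ 2 * A) ^ 2 := by ring

end Nazarov

section TrigonometricSums

open Finset Real

lemma sum_range_zpow_pow_of_isPrimitiveRoot {K : Type*} [Field K] {ζ : K} {n : ℕ}
    (hζ : IsPrimitiveRoot ζ n) (m : ℤ) :
    ∑ i ∈ range n, (ζ ^ m) ^ i = if (n : ℤ) ∣ m then (n : K) else 0 := by
  split_ifs with hdvd
  · simp [(hζ.zpow_eq_one_iff_dvd m).2 hdvd]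
  · have hne : ζ ^ m - 1 ≠ 0 := sub_ne_zero.2 fun h ↦ hdvd ((hζ.zpow_eq_one_iff_dvd m).1 h)
    have hpow : (ζ ^ m) ^ n = 1 := by
      rw [← zpow_natCast, ← zpow_mul, mul_comm, zpow_mul, zpow_natCast, hζ.pow_eq_one, one_zpow]
    refine (mul_eq_zero.1 ?_).resolve_right hne
    rw [geom_sum_mul, hpow, sub_self]

lemma sum_range_exp_two_pi_div_mul_I (n : ℕ) (m : ℤ) :
    ∑ i ∈ range n, Complex.exp ((2 * π / n * m * i : ℝ) * Complex.I) =
      if (n : ℤ) ∣ m then (n : ℂ) else 0 := by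
  rcases eq_or_ne n 0 with rfl | hn
  · simp
  rw [← sum_range_zpow_pow_of_isPrimitiveRoot (Complex.isPrimitiveRoot_exp n hn)]
  refine sum_congr rfl fun i _ ↦ ?_
  rw [← Complex.exp_int_mul, ← Complex.exp_nat_mul]
  congr 1
  push_cast
  ring

lemma sum_range_cos_two_pi_div (n : ℕ) (m : ℤ) :
    ∑ i ∈ range n, cos (2 * π / n * m * i) = if (n : ℤ) ∣ m then (n : ℝ) else 0 := by
  have h := congrArg Complex.re (sum_range_exp_two_pi_div_mul_I n m)
  rw [Complex.re_sum, sum_congr rfl fun i _ ↦ Complex.exp_ofReal_mul_I_re _] at h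
  rw [h]
  split_ifs <;> simp

lemma sum_range_sin_two_pi_div (n : ℕ) (m : ℤ) :
    ∑ i ∈ range n, sin (2 * π / n * m * i) = 0 := by
  have h := congrArg Complex.im (sum_range_exp_two_pi_div_mul_I n m)
  rw [Complex.im_sum, sum_congr rfl fun i _ ↦ Complex.exp_ofReal_mul_I_im _] at h
  rw [h]
  split_ifs <;> simp

lemma two_pi_div_mul_add (n : ℕ) (j k : ℤ) (i : ℕ) :
    2 * π / n * (j + k : ℤ) * i = 2 * π / n * j * i + 2 * π / n * k * i := by
  push_cast; ring

lemma two_pi_div_mul_sub (n : ℕ) (j k : ℤ) (i : ℕ) :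
    2 * π / n * (j - k : ℤ) * i = 2 * π / n * j * i - 2 * π / n * k * i := by
  push_cast; ring

lemma sum_range_cos_mul_cos (n : ℕ) (j k : ℤ) :
    ∑ i ∈ range n, cos (2 * π / n * j * i) * cos (2 * π / n * k * i) =
      ((if (n : ℤ) ∣ j - k then (n : ℝ) else 0) + if (n : ℤ) ∣ j + k then (n : ℝ) else 0) / 2 := by
  rw [← sum_range_cos_two_pi_div, ← sum_range_cos_two_pi_div, ← sum_add_distrib, sum_div]
  refine sum_congr rfl fun i _ ↦ ?_
  rw [two_pi_div_mul_add, two_pi_div_mul_sub, cos_add, cos_sub]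
  ring

lemma sum_range_sin_mul_sin (n : ℕ) (j k : ℤ) :
    ∑ i ∈ range n, sin (2 * π / n * j * i) * sin (2 * π / n * k * i) =
      ((if (n : ℤ) ∣ j - k then (n : ℝ) else 0) - if (n : ℤ) ∣ j + k then (n : ℝ) else 0) / 2 := by
  rw [← sum_range_cos_two_pi_div, ← sum_range_cos_two_pi_div, ← sum_sub_distrib, sum_div]
  refine sum_congr rfl fun i _ ↦ ?_
  rw [two_pi_div_mul_add, two_pi_div_mul_sub, cos_add, cos_sub]
  ring

lemma sum_range_cos_mul_sin (n : ℕ) (j k : ℤ) :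
    ∑ i ∈ range n, cos (2 * π / n * j * i) * sin (2 * π / n * k * i) = 0 := by
  calc _ = ∑ i ∈ range n,
        (sin (2 * π / n * (j + k : ℤ) * i) - sin (2 * π / n * (j - k : ℤ) * i)) / 2 := by
        refine sum_congr rfl fun i _ ↦ ?_
        rw [two_pi_div_mul_add, two_pi_div_mul_sub, sin_add, sin_sub]
        ring
    _ = 0 := by
        rw [← sum_div, sum_sub_distrib, sum_range_sin_two_pi_div, sum_range_sin_two_pi_div]
        simp

end TrigonometricSums

section RealDFT

open Finset Real

/-- The factor of `cos (2 * π / n * j * i)` in `psi n j i` for `j ≤ n / 2`, which is `1` exactly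
when this cosine vector is already normalized. -/
noncomputable def cosAmplitude (n j : ℕ) : ℝ := if j = 0 ∨ 2 * j = n then 1 else √2

lemma cosAmplitude_sq (n j : ℕ) : cosAmplitude n j ^ 2 = if j = 0 ∨ 2 * j = n then 1 else 2 := by
  unfold cosAmplitude
  split_ifs <;> simp

lemma psi_of_le_half {n j : ℕ} (hj : j ≤ n / 2) (i : ℕ) :
    psi n j i = cosAmplitude n j * cos (2 * π / n * (j : ℤ) * i) := by
  unfold psi cosAmplitude
  rw [Int.cast_natCast]
  split_ifs <;> first | omega | simp [*]

lemma psi_of_half_lt {n j : ℕ} (hj : n / 2 < j) (i : ℕ) :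
    psi n j i = √2 * sin (2 * π / n * (j : ℤ) * i) := by
  rw [psi, if_neg (by omega), if_neg (by omega), if_neg (by omega), Int.cast_natCast]

lemma natCast_dvd_natCast_sub_iff {n j k : ℕ} (hj : j < n) (hk : k < n) :
    (n : ℤ) ∣ j - k ↔ j = k := by
  refine ⟨fun h ↦ ?_, by rintro rfl; simp⟩
  have := Int.eq_zero_of_abs_lt_dvd h (by rw [abs_lt]; omega)
  omega

lemma natCast_dvd_natCast_add_iff {n j k : ℕ} (hj : j < n) (hk : k < n) :
    (n : ℤ) ∣ j + k ↔ j + k = 0 ∨ j + k = n := by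
  constructor
  · intro h
    obtain ⟨q, hq⟩ : n ∣ j + k := by exact_mod_cast h
    have hq_lt : q < 2 := by
      by_contra! hge
      have := Nat.mul_le_mul_left n hge
      omega
    interval_cases q <;> omega
  · rintro (h | h) <;> simp [← Nat.cast_add, h]

lemma sum_psi_mul_psi_of_le_of_lt {n j k : ℕ} (hj : j ≤ n / 2) (hk : n / 2 < k) :
    ∑ i ∈ range n, psi n j i * psi n k i = 0 := by
  rw [sum_congr rfl fun i _ ↦ by rw [psi_of_le_half hj, psi_of_half_lt hk, mul_mul_mul_comm],
    ← mul_sum, sum_range_cos_mul_sin, mul_zero]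

lemma sum_psi_mul_psi_of_le_of_le {n j k : ℕ} (hjn : j < n) (hkn : k < n) (hj : j ≤ n / 2)
    (hk : k ≤ n / 2) : ∑ i ∈ range n, psi n j i * psi n k i = if j = k then (n : ℝ) else 0 := by
  rw [sum_congr rfl fun i _ ↦ by rw [psi_of_le_half hj, psi_of_le_half hk, mul_mul_mul_comm],
    ← mul_sum, sum_range_cos_mul_cos]
  simp only [natCast_dvd_natCast_sub_iff hjn hkn, natCast_dvd_natCast_add_iff hjn hkn]
  rcases eq_or_ne j k with rfl | hjk
  · have hiff : (j + j = 0 ∨ j + j = n) ↔ (j = 0 ∨ 2 * j = n) := by omega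
    rw [← sq, cosAmplitude_sq]
    simp only [hiff, if_true]
    split_ifs <;> ring
  · have hsum : ¬(j + k = 0 ∨ j + k = n) := by omega
    rw [if_neg hjk, if_neg hsum]
    ring

lemma sum_psi_mul_psi_of_lt_of_lt {n j k : ℕ} (hjn : j < n) (hkn : k < n) (hj : n / 2 < j)
    (hk : n / 2 < k) : ∑ i ∈ range n, psi n j i * psi n k i = if j = k then (n : ℝ) else 0 := by
  have hsum : ¬(j + k = 0 ∨ j + k = n) := by omega
  rw [sum_congr rfl fun i _ ↦ by rw [psi_of_half_lt hj, psi_of_half_lt hk, mul_mul_mul_comm],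
    ← mul_sum, sum_range_sin_mul_sin, mul_self_sqrt zero_le_two]
  simp only [natCast_dvd_natCast_sub_iff hjn hkn, natCast_dvd_natCast_add_iff hjn hkn, hsum,
    if_false]
  ring

lemma sum_psi_mul_psi {n j k : ℕ} (hj : j < n) (hk : k < n) :
    ∑ i ∈ range n, psi n j i * psi n k i = if j = k then (n : ℝ) else 0 := by
  rcases le_or_gt j (n / 2) with hj' | hj' <;> rcases le_or_gt k (n / 2) with hk' | hk'
  · exact sum_psi_mul_psi_of_le_of_le hj hk hj' hk'
  · rw [sum_psi_mul_psi_of_le_of_lt hj' hk', if_neg (by omega)]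
  · simp only [mul_comm (psi n j _)]
    rw [sum_psi_mul_psi_of_le_of_lt hk' hj', if_neg (by omega)]
  · exact sum_psi_mul_psi_of_lt_of_lt hj hk hj' hk'

lemma l1psi_pos {n j : ℕ} (hj : j < n) : 0 < l1psi n j := by
  have hn : (0 : ℝ) < n := by exact_mod_cast j.zero_le.trans_lt hj
  obtain ⟨i, hi, hne⟩ : ∃ i ∈ range n, psi n j i * psi n j i ≠ 0 :=
    exists_ne_zero_of_sum_ne_zero (by simp [sum_psi_mul_psi hj hj, hn.ne'])
  exact mul_pos (one_div_pos.2 hn)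
    (sum_pos' (fun _ _ ↦ abs_nonneg _) ⟨i, hi, abs_pos.2 (left_ne_zero_of_mul hne)⟩)

lemma setOf_eq_l1psi_finite (n : ℕ) : {x | ∃ j < n, x = l1psi n j}.Finite :=
  ((range n).finite_toSet.image (l1psi n)).subset
    (by rintro x ⟨j, hj, rfl⟩; exact ⟨j, by simpa using hj, rfl⟩)

lemma beta_le_l1psi {n j : ℕ} (hj : j < n) : beta n ≤ l1psi n j :=
  csInf_le (setOf_eq_l1psi_finite n).bddBelow ⟨j, hj, rfl⟩

lemma beta_pos {n : ℕ} (hn : 0 < n) : 0 < beta n := by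
  have hne : {x | ∃ j < n, x = l1psi n j}.Nonempty := ⟨_, 0, hn, rfl⟩
  obtain ⟨j, hj, hbeta⟩ := hne.csInf_mem (setOf_eq_l1psi_finite n)
  rw [beta, hbeta]
  exact l1psi_pos hj

lemma integral_uniformOfFintype {α : Type*} [Fintype α] [Nonempty α] [MeasurableSpace α]
    [MeasurableSingletonClass α] (f : α → ℝ) :
    ∫ i, f i ∂(PMF.uniformOfFintype α).toMeasure = 1 / Fintype.card α * ∑ i, f i := by
  simp [PMF.integral_eq_sum, mul_sum]

lemma integral_psi_mul_psi {n : ℕ} [NeZero n] (j k : Fin n) :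
    ∫ i : Fin n, psi n j i * psi n k i ∂(PMF.uniformOfFintype (Fin n)).toMeasure =
      if j = k then 1 else 0 := by
  rw [integral_uniformOfFintype, ← sum_range fun i ↦ psi n j i * psi n k i,
    sum_psi_mul_psi j.2 k.2]
  simp [Fin.ext_iff]

lemma integral_abs_psi (n : ℕ) [NeZero n] (j : ℕ) :
    ∫ i : Fin n, |psi n j i| ∂(PMF.uniformOfFintype (Fin n)).toMeasure = l1psi n j := by
  rw [integral_uniformOfFintype, ← sum_range fun i ↦ |psi n j i|, Fintype.card_fin, l1psi]

end RealDFT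

/-- Nazarov's theorem, specialized to the real DFT basis and the sup norm: given
nonnegative `p_j` summing to 1, there is `b` with `‖b‖_∞ ≤ M(n)` and
`|(b, ψ_j)|² ≥ p_j` for all `j`, where `(u,v) = (1/n) ∑_i u_i v_i`. -/
theorem nazarov_coefficient_theorem
    (n : ℕ) (hn : 1 ≤ n) (p : Fin n → ℝ) (hp : ∀ j, 0 ≤ p j)
    (hsum : ∑ j, p j = 1) :
    ∃ b : Fin n → ℝ, (∀ i, |b i| ≤ Mnaz n) ∧
      ∀ j : Fin n, p j ≤ ((1 / (n : ℝ)) * ∑ i : Fin n, b i * psi n (j : ℕ) (i : ℕ)) ^ 2 := by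
  have : NeZero n := ⟨by omega⟩
  obtain ⟨b, -, hb, hcoeff⟩ := nazarov_coefficient_theorem_general (fun _ ↦ .of_discrete)
    integral_psi_mul_psi (beta_pos hn)
    (fun j ↦ (beta_le_l1psi j.2).trans_eq (integral_abs_psi n j).symm) hp hsum.le
  exact ⟨b, hb, by simpa only [integral_uniformOfFintype, Fintype.card_fin] using hcoeff⟩
end

section
/- If n ≥ 4 is divisible by 4, then β(n) = 1/√2, and this minimum is attained by the basis vector ψ_{n/4} (whose entries are √2·cos(πi/2), i = 0,…,n−1). -/
/-!
The vector `ψ_j` has mean square `1` and entries bounded by `√2` in absolute value, so averaging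
`ψ_j(i) ^ 2 ≤ √2 * |ψ_j(i)|` over `i` gives `1 ≤ √2 * l1psi n j` for every `n` and every `j < n`.
Equality holds as soon as every entry is `0` or `±√2`, which is the case for
`ψ_{n/4}(i) = √2 cos(πi/2)` because `cos` takes only the values `0` and `±1` at multiples of `π/2`.
-/

section Sums

variable {ι R : Type*} [Ring R] [LinearOrder R] [IsStrictOrderedRing R]
  {s : Finset ι} {f : ι → R} {c : R}

theorem sum_sq_le_mul_sum_abs (h : ∀ i ∈ s, |f i| ≤ c) :
    ∑ i ∈ s, f i ^ 2 ≤ c * ∑ i ∈ s, |f i| := by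
  rw [Finset.mul_sum]
  refine Finset.sum_le_sum fun i hi => ?_
  rw [← sq_abs, sq]
  exact mul_le_mul_of_nonneg_right (h i hi) (abs_nonneg _)

theorem sum_sq_eq_mul_sum_abs (h : ∀ i ∈ s, f i = 0 ∨ |f i| = c) :
    ∑ i ∈ s, f i ^ 2 = c * ∑ i ∈ s, |f i| := by
  rw [Finset.mul_sum]
  refine Finset.sum_congr rfl fun i hi => ?_
  rcases h i hi with h_zero | h_abs
  · simp [h_zero]
  · rw [← sq_abs, sq, h_abs]

end Sums

section Trigonometry

variable {n k : ℕ}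

theorem sum_cos_two_pi_div_mul_eq_zero (h : ¬ n ∣ k) :
    ∑ i ∈ Finset.range n, Real.cos (2 * Real.pi / n * k * i) = 0 := by
  rcases eq_or_ne n 0 with rfl | hn
  · simp
  set ζ : ℂ := Complex.exp (2 * Real.pi * Complex.I / n)
  have hζ : IsPrimitiveRoot ζ n := Complex.isPrimitiveRoot_exp n hn
  have hζk : ζ ^ k ≠ 1 := mt (hζ.dvd_of_pow_eq_one k) h
  have geom_sum : ∑ i ∈ Finset.range n, (ζ ^ k) ^ i = 0 := by
    rw [geom_sum_eq hζk, pow_right_comm, hζ.pow_eq_one, one_pow, sub_self, zero_div]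
  have re_pow (i : ℕ) : ((ζ ^ k) ^ i).re = Real.cos (2 * Real.pi / n * k * i) := by
    rw [← Complex.exp_ofReal_mul_I_re, ← Complex.exp_nat_mul, ← Complex.exp_nat_mul]
    congr 2
    push_cast
    ring
  simpa only [Complex.re_sum, re_pow, Complex.zero_re] using congrArg Complex.re geom_sum

theorem sum_cos_sq_two_pi_div_mul (h : ¬ n ∣ 2 * k) :
    ∑ i ∈ Finset.range n, Real.cos (2 * Real.pi / n * k * i) ^ 2 = n / 2 := by
  have double_angle (i : ℕ) :
      2 * (2 * Real.pi / n * k * i) = 2 * Real.pi / n * (2 * k : ℕ) * i := by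
    push_cast
    ring
  simp_rw [Real.cos_sq, double_angle]
  rw [Finset.sum_add_distrib, ← Finset.sum_div, ← Finset.sum_div,
    sum_cos_two_pi_div_mul_eq_zero h]
  simp

theorem sum_sin_sq_two_pi_div_mul (h : ¬ n ∣ 2 * k) :
    ∑ i ∈ Finset.range n, Real.sin (2 * Real.pi / n * k * i) ^ 2 = n / 2 := by
  simp_rw [Real.sin_sq, Finset.sum_sub_distrib, sum_cos_sq_two_pi_div_mul h]
  simp [sub_half]

theorem cos_pi_mul_div_two_eq_zero_or_abs_eq_one (i : ℕ) :
    Real.cos (Real.pi * i / 2) = 0 ∨ |Real.cos (Real.pi * i / 2)| = 1 := by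
  rcases Nat.even_or_odd' i with ⟨m, rfl | rfl⟩
  · right
    rw [← Real.abs_cos_int_mul_pi m]
    push_cast
    ring_nf
  · left
    rw [Real.cos_eq_zero_iff]
    exact ⟨m, by push_cast; ring⟩

end Trigonometry

section Psi

variable {n j : ℕ}

theorem psi_zero (n i : ℕ) : psi n 0 i = 1 := if_pos rfl

theorem psi_of_two_mul_lt (hj : j ≠ 0) (h : 2 * j < n) (i : ℕ) :
    psi n j i = √2 * Real.cos (2 * Real.pi / n * j * i) := by
  unfold psi
  split_ifs <;> first | rfl | omega

theorem psi_of_lt_two_mul (h : n < 2 * j) (i : ℕ) :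
    psi n j i = √2 * Real.sin (2 * Real.pi / n * j * i) := by
  unfold psi
  split_ifs <;> first | rfl | omega

theorem psi_two_mul_self (hj : j ≠ 0) (i : ℕ) : psi (2 * j) j i = (-1) ^ i := by
  have angle : 2 * Real.pi / (2 * j : ℕ) * j * i = i * Real.pi := by
    push_cast
    field_simp
  rw [← Real.cos_nat_mul_pi, ← angle]
  unfold psi
  split_ifs <;> first | rfl | omega

theorem psi_four_mul_self (hj : j ≠ 0) (i : ℕ) :
    psi (4 * j) j i = √2 * Real.cos (Real.pi * i / 2) := by
  have angle : 2 * Real.pi / (4 * j : ℕ) * j * i = Real.pi * i / 2 := by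
    push_cast
    field_simp
    norm_num
  rw [psi_of_two_mul_lt hj (by omega), angle]

theorem abs_psi_le_sqrt_two (n j i : ℕ) : |psi n j i| ≤ √2 := by
  have abs_sqrt_two_mul_le {x : ℝ} (hx : |x| ≤ 1) : |√2 * x| ≤ √2 := by
    rw [abs_mul, abs_of_nonneg (Real.sqrt_nonneg 2)]
    exact mul_le_of_le_one_right (Real.sqrt_nonneg 2) hx
  rcases eq_or_ne j 0 with rfl | hj
  · simp [psi_zero]
  rcases lt_trichotomy (2 * j) n with h | rfl | h
  · rw [psi_of_two_mul_lt hj h]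
    exact abs_sqrt_two_mul_le (Real.abs_cos_le_one _)
  · simp [psi_two_mul_self hj]
  · rw [psi_of_lt_two_mul h]
    exact abs_sqrt_two_mul_le (Real.abs_sin_le_one _)

theorem sum_psi_sq (hjn : j < n) : ∑ i ∈ Finset.range n, psi n j i ^ 2 = n := by
  rcases eq_or_ne j 0 with rfl | hj
  · simp [psi_zero]
  have not_dvd (h : 2 * j ≠ n) : ¬ n ∣ 2 * j := by
    rintro ⟨c, hc⟩
    have c_lt_two : c < 2 := by nlinarith
    interval_cases c <;> omega
  rcases lt_trichotomy (2 * j) n with h | rfl | h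
  · simp_rw [psi_of_two_mul_lt hj h, mul_pow, Real.sq_sqrt zero_le_two, ← Finset.mul_sum,
      sum_cos_sq_two_pi_div_mul (not_dvd h.ne)]
    ring
  · simp [psi_two_mul_self hj, ← pow_mul, mul_comm _ 2]
  · simp_rw [psi_of_lt_two_mul h, mul_pow, Real.sq_sqrt zero_le_two, ← Finset.mul_sum,
      sum_sin_sq_two_pi_div_mul (not_dvd h.ne')]
    ring

end Psi

section L1Norm

variable {n j : ℕ}

theorem l1psi_mul_sqrt_two (n j : ℕ) :
    l1psi n j * √2 = (√2 * ∑ i ∈ Finset.range n, |psi n j i|) / n := by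
  unfold l1psi
  ring

theorem one_div_sqrt_two_le_l1psi (hjn : j < n) : 1 / √2 ≤ l1psi n j := by
  have hn : (0 : ℝ) < n := Nat.cast_pos.mpr (by omega)
  rw [div_le_iff₀ (by positivity), l1psi_mul_sqrt_two, one_le_div hn, ← sum_psi_sq hjn]
  exact sum_sq_le_mul_sum_abs fun i _ => abs_psi_le_sqrt_two n j i

theorem l1psi_eq_one_div_sqrt_two (hjn : j < n)
    (h : ∀ i < n, psi n j i = 0 ∨ |psi n j i| = √2) : l1psi n j = 1 / √2 := by
  have hn : (n : ℝ) ≠ 0 := Nat.cast_ne_zero.mpr (by omega)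
  rw [eq_div_iff (by positivity), l1psi_mul_sqrt_two, div_eq_one_iff_eq hn,
    ← sum_sq_eq_mul_sum_abs fun i hi => h i (Finset.mem_range.mp hi), sum_psi_sq hjn]

theorem l1psi_four_mul_self (hj : j ≠ 0) : l1psi (4 * j) j = 1 / √2 := by
  refine l1psi_eq_one_div_sqrt_two (by omega) fun i _ => ?_
  rw [psi_four_mul_self hj]
  refine (cos_pi_mul_div_two_eq_zero_or_abs_eq_one i).imp (fun h => ?_) (fun h => ?_)
  · rw [h, mul_zero]
  · rw [abs_mul, h, mul_one, abs_of_nonneg (Real.sqrt_nonneg 2)]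

end L1Norm

/-- If `4 ∣ n` (and `n ≥ 4`), then `β(n) = 1/√2`, attained by the basis vector
`ψ_{n/4}`, whose entries are `√2 cos(πi/2)`. -/
theorem beta_eq_of_four_dvd (n : ℕ) (hn : 4 ≤ n) (h4 : 4 ∣ n) :
    beta n = 1 / Real.sqrt 2 ∧ l1psi n (n / 4) = 1 / Real.sqrt 2 ∧
      ∀ i : ℕ, psi n (n / 4) i = Real.sqrt 2 * Real.cos (Real.pi * i / 2) := by
  obtain ⟨m, rfl⟩ := h4
  have hm : m ≠ 0 := by omega
  rw [Nat.mul_div_cancel_left m four_pos]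
  refine ⟨IsLeast.csInf_eq ⟨⟨m, by omega, (l1psi_four_mul_self hm).symm⟩, ?_⟩,
    l1psi_four_mul_self hm, psi_four_mul_self hm⟩
  rintro _ ⟨j, hj, rfl⟩
  exact one_div_sqrt_two_le_l1psi hj
end
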